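/- Let m ≥ 2 be an integer and let f ∈ ℤ[X] be irreducible in ℤ[X] of degree m whose constant coefficient equals m! or −m!. Then for every positive integer n, f(X^n) is irreducible in ℤ[X]. -/

import Mathlib

/-!
Let `q` be a prime dividing `f(0)` exactly once; for `f(0) = ±m!` Bertrand's postulate supplies one
with `m / 2 < q ≤ m`. It suffices to treat `f(X ^ p)` with `p` prime. By Capelli's criterion,
`f(X ^ p)` can only be reducible if a root `α` of `f` is a `p`-th power `β ^ p` in `K(α)`. Let `g`
be a primitive polynomial over the base ring with root `β` and `deg g ≤ deg f`, and let `N` be the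
polynomial with `N(X ^ p) = ∏ g(ζ X)`, the product running over the `p`-th roots of unity. Then
`N(α) = 0` and `deg N ≤ deg f`, so `N = c f` with `c` constant, and `q ∤ c` because reduction
modulo `q` keeps `N` nonzero. Hence `c f(0) = N(0) = g(0) ^ p` is divisible by `q` exactly once,
which is absurd.
-/

open Polynomial

universe u

section PowNorm

variable {R S : Type*} [CommRing R] [CommRing S] {p : ℕ}

lemma natDegree_det_le_sum {ι : Type*} [Fintype ι] [DecidableEq ι] (M : Matrix ι ι R[X])
    (d : ι → ℕ) (hM : ∀ i j, (M i j).natDegree ≤ d j) : M.det.natDegree ≤ ∑ j, d j := by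
  rw [Matrix.det_apply]
  refine natDegree_sum_le_of_forall_le _ _ fun σ _ ↦ (natDegree_smul_le _ _).trans ?_
  exact (natDegree_prod_le _ _).trans (Finset.sum_le_sum fun j _ ↦ hM _ j)

lemma natDegree_X_pow_sub_C_le (n : ℕ) (r : R) : (X ^ n - C r).natDegree ≤ n := by
  compute_degree

/-- The norm of `g` for the ring extension `R[X ^ p] ⊆ R[X]`, with `X ^ p` renamed to `X`. It is
encoded as the resultant in `Y` of `Y ^ p - X` and `g(Y)`, so its roots are the `p`-th powers of
the roots of `g`. -/
noncomputable def powNorm (p : ℕ) (g : R[X]) : R[X] :=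
  resultant (X ^ p - C X : R[X][X]) (g.map C) p g.natDegree

lemma powNorm_eq_resultant (hp : p ≠ 0) {g : R[X]} {d : ℕ} (hd : g.natDegree ≤ d) :
    powNorm p g = resultant (X ^ p - C X : R[X][X]) (g.map C) p d := by
  obtain ⟨k, rfl⟩ := Nat.exists_eq_add_of_le hd
  rw [resultant_add_right_deg _ _ _ _ _ natDegree_map_le]
  simp [powNorm, coeff_C, hp]

lemma powNorm_map (hp : p ≠ 0) (φ : R →+* S) (g : R[X]) :
    powNorm p (g.map φ) = (powNorm p g).map φ := by
  rw [powNorm_eq_resultant hp natDegree_map_le, powNorm, ← coe_mapRingHom φ, ← resultant_map_map]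
  congr 1
  · simp
  · simp [map_map, mapRingHom_comp_C]

lemma powNorm_mul (hp : p ≠ 0) (g h : R[X]) :
    powNorm p (g * h) = powNorm p g * powNorm p h := by
  have hmul := resultant_mul_right (X ^ p - C X : R[X][X]) (g.map C) (h.map C) p
    (natDegree_X_pow_sub_C_le p (X : R[X]))
  simp only [natDegree_map_eq_of_injective C_injective] at hmul
  rw [powNorm_eq_resultant hp natDegree_mul_le, Polynomial.map_mul, hmul, powNorm, powNorm]

lemma powNorm_X_pow (hp : p ≠ 0) (k : ℕ) :
    powNorm p (X ^ k : R[X]) = (-1) ^ (p * k) * (-X) ^ k := by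
  rw [powNorm_eq_resultant hp (natDegree_X_pow_le k), Polynomial.map_pow, map_X,
    resultant_X_pow_right _ _ _ (natDegree_X_pow_sub_C_le p (X : R[X]))]
  simp [coeff_X_pow, hp.symm]

lemma coeff_zero_powNorm (p : ℕ) (g : R[X]) : (powNorm p g).coeff 0 = g.coeff 0 ^ p := by
  rw [coeff_zero_eq_eval_zero, ← coe_evalRingHom, powNorm, ← resultant_map_map,
    ← resultant_X_pow_left g p g.natDegree le_rfl]
  congr 1
  · simp
  · ext i
    simp

lemma natDegree_powNorm_le (p : ℕ) (g : R[X]) : (powNorm p g).natDegree ≤ g.natDegree := by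
  refine (natDegree_det_le_sum _ (Fin.addCases (fun _ ↦ 0) fun _ ↦ 1) fun i j ↦ ?_).trans ?_
  · induction j using Fin.addCases with
    | left j =>
      simp only [sylvester, Matrix.of_apply, Fin.addCases_left]
      split_ifs <;> simp
    | right j =>
      simp only [sylvester, Matrix.of_apply, Fin.addCases_right, coeff_sub, coeff_X_pow, coeff_C]
      split_ifs <;> compute_degree!
  · simp [Fin.sum_univ_add]

lemma aeval_powNorm_eq_zero {A : Type*} [CommRing A] [Algebra R A] (hp : p ≠ 0) {g : R[X]} {b : A}
    (hb : aeval b g = 0) : aeval (b ^ p) (powNorm p g) = 0 := by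
  obtain ⟨u, v, -, -, hbezout⟩ := exists_mul_add_mul_eq_C_resultant
    (X ^ p - C X : R[X][X]) (g.map C) (natDegree_X_pow_sub_C_le p (X : R[X]))
    (natDegree_map_le (f := C) (p := g)) (Or.inl hp)
  let φ : R[X] →+* A := (aeval (b ^ p) : R[X] →ₐ[R] A).toRingHom
  have hφC : φ.comp C = algebraMap R A := RingHom.ext fun r ↦ aeval_C (b ^ p) r
  have hφX : φ X = b ^ p := aeval_X (b ^ p)
  have heval : eval₂ φ b (C (powNorm p g)) = 0 := by
    rw [powNorm, ← hbezout]
    simp [eval₂_mul, eval₂_map, hφC, hφX, ← aeval_def, hb]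
  rwa [eval₂_C] at heval

lemma powNorm_ne_zero [IsDomain R] (hp : p ≠ 0) {g : R[X]} (hg : g ≠ 0) : powNorm p g ≠ 0 := by
  obtain ⟨h, hgh, hh⟩ := exists_eq_pow_rootMultiplicity_mul_and_not_dvd g hg 0
  rw [C_0, sub_zero] at hgh hh
  have hh_norm : powNorm p h ≠ 0 := fun h_zero ↦ by
    have hcoeff := coeff_zero_powNorm p h
    rw [h_zero, coeff_zero] at hcoeff
    exact hh (X_dvd_iff.mpr (eq_zero_of_pow_eq_zero hcoeff.symm))
  rw [hgh, powNorm_mul hp, powNorm_X_pow hp]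
  exact mul_ne_zero (by simp) hh_norm

lemma C_dvd_iff_map_quotientMk_eq_zero {q : R} {g : R[X]} :
    C q ∣ g ↔ g.map (Ideal.Quotient.mk (Ideal.span {q})) = 0 := by
  simp [C_dvd_iff_dvd_coeff, Polynomial.ext_iff, Ideal.Quotient.eq_zero_iff_dvd]

lemma C_dvd_of_C_dvd_powNorm (hp : p ≠ 0) {q : R} (hq : Prime q) {g : R[X]}
    (hdvd : C q ∣ powNorm p g) : C q ∣ g := by
  have : (Ideal.span {q}).IsPrime := (Ideal.span_singleton_prime hq.ne_zero).mpr hq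
  rw [C_dvd_iff_map_quotientMk_eq_zero] at hdvd ⊢
  rw [← powNorm_map hp] at hdvd
  exact not_imp_not.mp (powNorm_ne_zero hp) hdvd

end PowNorm

lemma isPrimitive_expand {R : Type*} [CommSemiring R] {n : ℕ} (hn : 0 < n) {f : R[X]}
    (hf : f.IsPrimitive) : (expand R n f).IsPrimitive := by
  refine fun r hr ↦ hf r ?_
  rw [C_dvd_iff_dvd_coeff] at hr ⊢
  exact fun i ↦ coeff_expand_mul hn f i ▸ hr (i * n)

section GaussLemma

variable {R : Type*} [CommRing R] [IsDomain R] [IsGCDMonoid R]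

lemma exists_isPrimitive_associated_map {K : Type*} [Field K] [Algebra R K] [IsFractionRing R K]
    {P : K[X]} (hP : P ≠ 0) :
    ∃ g : R[X], g.IsPrimitive ∧ Associated (g.map (algebraMap R K)) P := by
  let : NormalizedGCDMonoid R := Nonempty.some inferInstance
  set G := IsLocalization.integerNormalization (nonZeroDivisors R) P
  obtain ⟨b, hb, hG⟩ := IsLocalization.integerNormalization_spec (nonZeroDivisors R) P
  have hG_ne_zero : G ≠ 0 := IsFractionRing.integerNormalization_eq_zero_iff.not.mpr hP
  have hcontent : algebraMap R K G.content ≠ 0 := by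
    simpa [content_eq_zero_iff] using hG_ne_zero
  have hb' : algebraMap R K b ≠ 0 := by simpa using nonZeroDivisors.ne_zero hb
  refine ⟨G.primPart, G.isPrimitive_primPart, ?_⟩
  have hscaled : C (algebraMap R K G.content) * G.primPart.map (algebraMap R K) =
      C (algebraMap R K b) * P := by
    rw [← map_C, ← Polynomial.map_mul, ← G.eq_C_content_mul_primPart, hG, algebra_compatible_smul K,
      smul_eq_C_mul]
  rw [← associated_isUnit_mul_left_iff (isUnit_C.mpr hcontent.isUnit), hscaled]
  exact associated_unit_mul_left _ _ (isUnit_C.mpr hb'.isUnit)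

variable (K : Type*) [Field K] [Algebra R K] [IsFractionRing R K]
variable {L : Type*} [Field L] [Algebra R L] [Algebra K L] [IsScalarTower R K L]

lemma exists_isPrimitive_natDegree_eq_minpoly {b : L} (hb : IsIntegral K b) :
    ∃ g : R[X], g.IsPrimitive ∧ g.natDegree = (minpoly K b).natDegree ∧ aeval b g = 0 := by
  obtain ⟨g, hg, hassoc⟩ := exists_isPrimitive_associated_map (R := R) (minpoly.ne_zero hb)
  refine ⟨g, hg, ?_, ?_⟩
  · rw [← natDegree_map_eq_of_injective (IsFractionRing.injective R K) g]
    exact natDegree_eq_of_degree_eq (degree_eq_degree_of_associated hassoc)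
  · rw [← aeval_map_algebraMap K]
    exact aeval_eq_zero_of_dvd_aeval_eq_zero hassoc.symm.dvd (minpoly.aeval K b)

lemma dvd_of_aeval_eq_zero [FaithfulSMul R L] {f F : R[X]} (hf : Irreducible f)
    (hprim : f.IsPrimitive) {a : L} (hfa : aeval a f = 0) (hFa : aeval a F = 0) : f ∣ F := by
  let := FractionRing.liftAlgebra R L
  have := FractionRing.isScalarTower_liftAlgebra R L
  have hirr := (hprim.irreducible_iff_irreducible_map_fraction_map (K := FractionRing R)).mp hf
  rw [hprim.dvd_iff_fraction_map_dvd_fraction_map (FractionRing R)]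
  rw [← aeval_map_algebraMap (FractionRing R)] at hfa hFa
  exact (hirr.dvd_iff_aeval_eq_zero hfa).mp hFa

lemma exists_powNorm_eq_mul_C [FaithfulSMul R L] {p : ℕ} (hp : p ≠ 0) {f g : R[X]}
    (hf : Irreducible f) (hprim : f.IsPrimitive) (hdeg : g.natDegree ≤ f.natDegree) {b : L}
    (hfb : aeval (b ^ p) f = 0) (hgb : aeval b g = 0) : ∃ c : R, powNorm p g = f * C c := by
  obtain ⟨c, hc⟩ := dvd_of_aeval_eq_zero hf hprim hfb (aeval_powNorm_eq_zero hp hgb)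
  rcases eq_or_ne c 0 with rfl | hc_ne_zero
  · exact ⟨0, by rw [hc, C_0]⟩
  have hle : (powNorm p g).natDegree ≤ f.natDegree := (natDegree_powNorm_le p g).trans hdeg
  rw [hc, natDegree_mul hf.ne_zero hc_ne_zero] at hle
  exact ⟨c.coeff 0, by rw [hc, ← eq_C_of_natDegree_eq_zero (by omega)]⟩

lemma aeval_pow_ne_zero_of_finrank_le [FiniteDimensional K L] {p : ℕ} (hp : 2 ≤ p) {f : R[X]}
    (hf : Irreducible f) {q : R} (hq : Prime q) (hdvd : q ∣ f.coeff 0) (hsq : ¬ q ^ 2 ∣ f.coeff 0)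
    (hfinrank : Module.finrank K L ≤ f.natDegree) (b : L) : aeval (b ^ p) f ≠ 0 := by
  intro hroot
  have hp0 : p ≠ 0 := by omega
  have : FaithfulSMul R L := FaithfulSMul.trans R K L
  have hprim : f.IsPrimitive := hf.isPrimitive (Module.finrank_pos.trans_le hfinrank).ne'
  obtain ⟨g, hg, hg_deg, hgb⟩ :=
    exists_isPrimitive_natDegree_eq_minpoly (R := R) K (IsIntegral.of_finite K b)
  have hdeg : g.natDegree ≤ f.natDegree := hg_deg ▸ (minpoly.natDegree_le b).trans hfinrank
  obtain ⟨c, hc⟩ := exists_powNorm_eq_mul_C hp0 hf hprim hdeg hroot hgb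
  have hq_not_dvd : ¬ q ∣ c := fun h ↦
    hq.not_isUnit (hg q (C_dvd_of_C_dvd_powNorm hp0 hq (hc ▸ (map_dvd C h).mul_left f)))
  have hcoeff : g.coeff 0 ^ p = f.coeff 0 * c := by
    rw [← coeff_zero_powNorm, hc, coeff_mul_C]
  have hq_dvd : q ∣ g.coeff 0 := hq.dvd_of_dvd_pow (hcoeff ▸ hdvd.mul_right c)
  have hsq_dvd : q ^ 2 ∣ f.coeff 0 * c :=
    hcoeff ▸ (pow_dvd_pow q hp).trans (pow_dvd_pow_of_dvd hq_dvd p)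
  exact hsq (hq.pow_dvd_of_dvd_mul_right 2 hq_not_dvd hsq_dvd)

end GaussLemma

lemma irreducible_expand_of_monic_of_forall_aeval_pow_ne_zero {K : Type u} [Field K] {p : ℕ}
    (hp : p.Prime) {f : K[X]} (hf : Irreducible f) (hmonic : f.Monic)
    (hpow : ∀ (L : Type u) [Field L] [Algebra K L] [FiniteDimensional K L],
      Module.finrank K L = f.natDegree → ∀ b : L, aeval (b ^ p) f ≠ 0) :
    Irreducible (expand K p f) := by
  rw [expand_eq_comp_X_pow]
  refine irreducible_comp hmonic (monic_X_pow p) hf fun E _ _ x hx ↦ ?_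
  have hx_int : IsIntegral K x := minpoly.ne_zero_iff.mp (hx ▸ hf.ne_zero)
  have := IntermediateField.adjoin.finiteDimensional hx_int
  rw [Polynomial.map_pow, map_X]
  refine X_pow_sub_C_irreducible_of_prime hp fun b hb ↦ ?_
  refine hpow _ (hx ▸ IntermediateField.adjoin.finrank hx_int) b ?_
  rw [hb, ← hx, ← IntermediateField.minpoly_gen K x]
  exact minpoly.aeval K _

lemma irreducible_expand_of_forall_aeval_pow_ne_zero {K : Type u} [Field K] {p : ℕ}
    (hp : p.Prime) {f : K[X]} (hf : Irreducible f)
    (hpow : ∀ (L : Type u) [Field L] [Algebra K L] [FiniteDimensional K L],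
      Module.finrank K L = f.natDegree → ∀ b : L, aeval (b ^ p) f ≠ 0) :
    Irreducible (expand K p f) := by
  have hlead : f.leadingCoeff⁻¹ ≠ 0 := inv_ne_zero (leadingCoeff_ne_zero.mpr hf.ne_zero)
  have hunit : IsUnit (C f.leadingCoeff⁻¹) := isUnit_C.mpr hlead.isUnit
  have hmonic := irreducible_expand_of_monic_of_forall_aeval_pow_ne_zero hp
    ((irreducible_mul_isUnit hunit).mpr hf) (monic_mul_leadingCoeff_inv hf.ne_zero)
    fun L _ _ _ hL b ↦ by
      rw [natDegree_mul_C hlead] at hL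
      simpa [hf.ne_zero] using hpow L hL b
  rwa [map_mul, expand_C, irreducible_mul_isUnit hunit] at hmonic

section Expand

variable {R : Type*} [CommRing R] [IsDomain R] [IsGCDMonoid R] {f : R[X]} {q : R}

lemma irreducible_expand_prime {p : ℕ} (hp : p.Prime) (hf : Irreducible f) (hq : Prime q)
    (hdvd : q ∣ f.coeff 0) (hsq : ¬ q ^ 2 ∣ f.coeff 0) : Irreducible (expand R p f) := by
  by_cases hdeg : f.natDegree = 0
  · rw [eq_C_of_natDegree_eq_zero hdeg] at hf ⊢
    rwa [expand_C]
  let K := FractionRing R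
  have hprim : f.IsPrimitive := hf.isPrimitive hdeg
  have hf_map : Irreducible (f.map (algebraMap R K)) :=
    hprim.irreducible_iff_irreducible_map_fraction_map.mp hf
  rw [(isPrimitive_expand hp.pos hprim).irreducible_iff_irreducible_map_fraction_map (K := K),
    map_expand]
  refine irreducible_expand_of_forall_aeval_pow_ne_zero hp hf_map fun L _ _ _ hL b ↦ ?_
  let : Algebra R L := Algebra.compHom L (algebraMap R K)
  have : IsScalarTower R K L := .of_algebraMap_eq' rfl
  rw [aeval_map_algebraMap]
  exact aeval_pow_ne_zero_of_finrank_le K hp.two_le hf hq hdvd hsq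
    (hL.trans_le natDegree_map_le) b

theorem irreducible_expand_of_prime_dvd_coeff_zero {n : ℕ} (hn : n ≠ 0) (hf : Irreducible f)
    (hq : Prime q) (hdvd : q ∣ f.coeff 0) (hsq : ¬ q ^ 2 ∣ f.coeff 0) :
    Irreducible (expand R n f) := by
  induction n using induction_on_primes with
  | zero => exact absurd rfl hn
  | one => rwa [expand_one]
  | prime_mul p n hp ih =>
    have hn' : n ≠ 0 := right_ne_zero_of_mul hn
    have hcoeff : (expand R n f).coeff 0 = f.coeff 0 := by
      simpa using coeff_expand_mul (Nat.pos_of_ne_zero hn') f 0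
    rw [expand_mul]
    exact irreducible_expand_prime hp (ih hn') hq (hcoeff ▸ hdvd) (hcoeff ▸ hsq)

end Expand

lemma exists_prime_dvd_factorial_and_not_sq_dvd {m : ℕ} (hm : 2 ≤ m) :
    ∃ q : ℕ, q.Prime ∧ q ∣ m.factorial ∧ ¬ q ^ 2 ∣ m.factorial := by
  obtain ⟨q, hq, hlt, hle⟩ := Nat.exists_prime_lt_and_le_two_mul (m / 2) (by omega)
  have hlt' : m < 2 * q := by omega
  have hlog : Nat.log q m < 2 := Nat.log_lt_of_lt_pow (by omega) (by nlinarith [hq.two_le])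
  have hdiv : m / q = 1 := Nat.div_eq_of_lt_le (by omega) (by omega)
  refine ⟨q, hq, hq.dvd_factorial.mpr (by omega), ?_⟩
  simp [hq.pow_dvd_factorial_iff hlog, hdiv]

theorem stmt19_general {m : ℕ} (hm : 2 ≤ m) {f : ℤ[X]} (hf : Irreducible f)
    (hconst : f.coeff 0 = (m.factorial : ℤ) ∨ f.coeff 0 = -(m.factorial : ℤ))
    {n : ℕ} (hn : n ≠ 0) :
    Irreducible (f.comp (X ^ n)) := by
  obtain ⟨q, hq, hdvd, hsq⟩ := exists_prime_dvd_factorial_and_not_sq_dvd hm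
  have hassoc : Associated (f.coeff 0) m.factorial := Int.associated_iff.mpr hconst
  rw [← expand_eq_comp_X_pow]
  refine irreducible_expand_of_prime_dvd_coeff_zero hn hf (Nat.prime_iff_prime_int.mp hq) ?_ ?_
  · rw [hassoc.dvd_iff_dvd_right]
    exact_mod_cast hdvd
  · rw [hassoc.dvd_iff_dvd_right]
    exact_mod_cast hsq

theorem stmt19 (m : ℕ) (hm : 2 ≤ m) (f : Polynomial ℤ) (hf : Irreducible f)
    (hdeg : f.natDegree = m)
    (hconst : f.coeff 0 = (m.factorial : ℤ) ∨ f.coeff 0 = -(m.factorial : ℤ))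
    (n : ℕ) (hn : 0 < n) :
    Irreducible (f.comp (X ^ n)) :=
  stmt19_general hm hf hconst hn.ne'
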